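/- For K ≥ 1, define T_K = Σ_{k=1}^{K} σ_{k−1}/σ_0 and the weighted averages X_K = (1/T_K)·Σ_{k=1}^{K} (σ_{k−1}/σ_0)·x_k and Y_K⋆ = (1/T_K)·Σ_{k=1}^{K} (σ_{k−1}/σ_0)·y_k⋆. Then for every x ∈ dom g ∩ dom φ_X and every y⋆ ∈ dom h⋆ ∩ dom φ_{Y⋆}, the iterates of the accelerated nonlinear PDHG method for strongly convex problems satisfy T_K·(L(X_K, y⋆) − L(x, Y_K⋆)) ≤ Δ_0(x, y⋆) − (σ_K/σ_0)·Δ_K(x, y⋆). -/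

import Mathlib

theorem aux_opt {E : Type*} [AddCommGroup E] [Module ℝ E] {C : Set E} {G φ : E → ℝ}
    (hG : ConvexOn ℝ C G) (l : E →ₗ[ℝ] ℝ) (c d : ℝ) {a x : E} (ha : a ∈ C) (hx : x ∈ C)
    (hd : HasDerivAt (fun t : ℝ => φ (a + t • (x - a))) d 0)
    (hmin : ∀ y ∈ C, G a + l a + c * φ a ≤ G y + l y + c * φ y) :
    0 ≤ G x - G a + l (x - a) + c * d := by
  have hd1 := (hd.const_mul c).add_const (0:ℝ)
  have ht := hd.tendsto_slope_zero_right
  have ht2 : Filter.Tendsto (fun t : ℝ => G x - G a + l (x - a) +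
      c * (t⁻¹ • (φ (a + (0 + t) • (x - a)) - φ (a + (0:ℝ) • (x - a)))))
      (nhdsWithin 0 (Set.Ioi 0)) (nhds (G x - G a + l (x - a) + c * d)) :=
    (ht.const_mul c).const_add _
  refine ge_of_tendsto ht2 ?_
  filter_upwards [Ioo_mem_nhdsGT (show (0:ℝ) < 1 by norm_num)] with t ht
  obtain ⟨h0, h1⟩ := ht
  have e : a + t • (x - a) = (1 - t) • a + t • x := by module
  have hm := hG.1 ha hx (by linarith : (0:ℝ) ≤ 1 - t) h0.le (by ring)
  have hc := hG.2 ha hx (by linarith : (0:ℝ) ≤ 1 - t) h0.le (by ring)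
  have hy := hmin _ hm
  rw [← e] at hc hy
  have hl : l (a + t • (x - a)) = l a + t * l (x - a) := by simp
  rw [hl] at hy
  simp only [zero_add, zero_smul, add_zero, smul_eq_mul] at hc ⊢
  have key : 0 ≤ t * (G x - G a + l (x - a)) + c * (φ (a + t • (x - a)) - φ a) := by
    nlinarith
  have : G x - G a + l (x - a) + c * (t⁻¹ * (φ (a + t • (x - a)) - φ a))
      = t⁻¹ * (t * (G x - G a + l (x - a)) + c * (φ (a + t • (x - a)) - φ a)) := by
    field_simp
  rw [this]
  positivity

theorem aux_jensen {E : Type*} [AddCommGroup E] [Module ℝ E] {C : Set E} {G : E → ℝ}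
    (hG : ConvexOn ℝ C G) (s : Finset ℕ) (w : ℕ → ℝ) (z : ℕ → E) (T : ℝ)
    (hw : ∀ i ∈ s, 0 ≤ w i) (hT : T = ∑ i ∈ s, w i) (hTp : 0 < T) (hz : ∀ i ∈ s, z i ∈ C) :
    T * G (T⁻¹ • ∑ i ∈ s, w i • z i) ≤ ∑ i ∈ s, w i * G (z i) := by
  have h := hG.map_centerMass_le hw (by rw [← hT]; exact hTp) hz
  simp only [Finset.centerMass, ← hT, smul_eq_mul] at h
  calc _ ≤ T * (T⁻¹ * ∑ i ∈ s, w i * G (z i)) := mul_le_mul_of_nonneg_left h hTp.le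
    _ = _ := by field_simp

open Filter Topology

theorem accsc_rate
    {X Y : Type*} [NormedAddCommGroup X] [NormedSpace ℝ X] [CompleteSpace X]
    [NormedAddCommGroup Y] [NormedSpace ℝ Y] [CompleteSpace Y]
    (A : X →L[ℝ] Y)
    (φX : X → ℝ) (SX : Set X) (gX : X → (X →L[ℝ] ℝ))
    (φY : (Y →L[ℝ] ℝ) → ℝ) (SY : Set (Y →L[ℝ] ℝ)) (gY : (Y →L[ℝ] ℝ) → Y)
    (hSXne : SX.Nonempty) (hφXconv : ConvexOn ℝ SX φX)
    (hφXlsc : LowerSemicontinuousOn φX SX)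
    (hSYne : SY.Nonempty) (hφYconv : ConvexOn ℝ SY φY)
    (hφYlsc : LowerSemicontinuousOn φY SY)
    (hφXdiff : ∀ x ∈ interior SX, ∀ w : X,
      HasDerivAt (fun t : ℝ => φX (x + t • w)) (gX x w) 0)
    (hφYdiff : ∀ p ∈ interior SY, ∀ q : Y →L[ℝ] ℝ,
      HasDerivAt (fun t : ℝ => φY (p + t • q)) (q (gY p)) 0)
    (DX : X → X → ℝ) (hDXdef : ∀ x x', DX x x' = φX x - φX x' - gX x' (x - x'))
    (DY : (Y →L[ℝ] ℝ) → (Y →L[ℝ] ℝ) → ℝ)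
    (hDYdef : ∀ p q, DY p q = φY p - φY q - (p - q) (gY q))
    (hscX : ∀ x ∈ SX, ∀ x' ∈ interior SX, (1/2) * ‖x - x'‖ ^ 2 ≤ DX x x')
    (hscY : ∀ p ∈ SY, ∀ q ∈ interior SY, (1/2) * ‖p - q‖ ^ 2 ≤ DY p q)
    (g : X → ℝ) (Sg : Set X) (hSgne : Sg.Nonempty)
    (hgconv : ConvexOn ℝ Sg g) (hglsc : LowerSemicontinuousOn g Sg)
    (hst : (Y →L[ℝ] ℝ) → ℝ) (Sh : Set (Y →L[ℝ] ℝ)) (hShne : Sh.Nonempty)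
    (hhconv : ConvexOn ℝ Sh hst) (hhlsc : LowerSemicontinuousOn hst Sh)
    (L : X → (Y →L[ℝ] ℝ) → ℝ) (hLdef : ∀ x p, L x p = g x + p (A x) - hst p)
    (γg : ℝ) (hγg : 0 < γg)
    (hA6 : ConvexOn ℝ (Sg ∩ SX) (fun x => g x - γg * φX x))
    (hAne : A ≠ 0)
    (θ τ σ : ℕ → ℝ) (hθ0 : 0 < θ 0 ∧ θ 0 ≤ 1) (hσ0 : 0 < σ 0)
    (hτ0 : τ 0 = 1 / (‖A‖ ^ 2 * σ 0))
    (hθrec : ∀ k : ℕ, θ (k+1) = 1 / Real.sqrt (1 + γg * τ k))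
    (hτrec : ∀ k : ℕ, τ (k+1) = θ (k+1) * τ k)
    (hσrec : ∀ k : ℕ, σ (k+1) = σ k / θ (k+1))
    (u : ℕ → X) (v : ℕ → (Y →L[ℝ] ℝ))
    (hu : ∀ k, u k ∈ Sg ∩ interior SX)
    (hv : ∀ k, v k ∈ Sh ∩ interior SY)
    (hstepx : ∀ k : ℕ, ∀ x ∈ Sg ∩ SX,
      g (u (k+1)) + (v k + θ k • (v k - v (k-1))) (A (u (k+1)))
          + (1/τ k) * DX (u (k+1)) (u k) ≤
        g x + (v k + θ k • (v k - v (k-1))) (A x) + (1/τ k) * DX x (u k))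
    (hstepy : ∀ k : ℕ, ∀ p ∈ Sh ∩ SY,
      -hst p + p (A (u (k+1))) - (1/σ k) * DY p (v k) ≤
        -hst (v (k+1)) + (v (k+1)) (A (u (k+1))) - (1/σ k) * DY (v (k+1)) (v k))
    (Δ : ℕ → X → (Y →L[ℝ] ℝ) → ℝ)
    (hΔdef : ∀ (k : ℕ) (x : X) (p : Y →L[ℝ] ℝ),
      Δ k x p = (1/τ k) * DX x (u k) + (1/σ k) * DY p (v k)
        + (1/σ k) * DY (v k) (v (k-1)) + θ k * ((v k - v (k-1)) (A (x - u k))))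
    (T : ℕ → ℝ) (hT : ∀ K : ℕ, T K = ∑ k ∈ Finset.Icc 1 K, σ (k-1) / σ 0)
    (XK : ℕ → X) (YK : ℕ → (Y →L[ℝ] ℝ))
    (hXK : ∀ K : ℕ, XK K = (T K)⁻¹ • ∑ k ∈ Finset.Icc 1 K, (σ (k-1) / σ 0) • u k)
    (hYK : ∀ K : ℕ, YK K = (T K)⁻¹ • ∑ k ∈ Finset.Icc 1 K, (σ (k-1) / σ 0) • v k) :
    ∀ K : ℕ, 1 ≤ K → ∀ x ∈ Sg ∩ SX, ∀ p ∈ Sh ∩ SY,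
      T K * (L (XK K) p - L x (YK K)) ≤ Δ 0 x p - (σ K / σ 0) * Δ K x p := by
  have hApos : 0 < ‖A‖ := norm_pos_iff.mpr hAne
  have hpos : ∀ k, 0 < τ k ∧ 0 < σ k ∧ 0 < θ k ∧ θ k ≤ 1 ∧ ‖A‖ ^ 2 * σ k * τ k = 1 := by
    intro k
    induction k with
    | zero =>
      refine ⟨by rw [hτ0]; positivity, hσ0, hθ0.1, hθ0.2, ?_⟩
      rw [hτ0]; field_simp
    | succ k ih =>
      obtain ⟨h1, h2, -, -, h5⟩ := ih
      have hs : 1 ≤ Real.sqrt (1 + γg * τ k) := by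
        rw [Real.one_le_sqrt]; nlinarith [mul_pos hγg h1]
      have hθp : 0 < θ (k+1) := by rw [hθrec]; positivity
      refine ⟨by rw [hτrec]; positivity, by rw [hσrec]; positivity, hθp, ?_, ?_⟩
      · rw [hθrec, div_le_one (by linarith)]; exact hs
      · rw [hσrec, hτrec, ← h5]; field_simp
  have hθsq : ∀ k, 1 = (1 + γg * τ k) * θ (k+1) ^ 2 := by
    intro k
    have h1 := (hpos k).1
    rw [hθrec, div_pow, Real.sq_sqrt (by positivity)]
    field_simp
  -- one step estimate
  have hstep : ∀ k, ∀ x ∈ Sg ∩ SX, ∀ p ∈ Sh ∩ SY,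
      L (u (k+1)) p - L x (v (k+1)) ≤ Δ k x p - (1 / θ (k+1)) * Δ (k+1) x p := by
    intro k x hx p hp
    obtain ⟨hτ, hσ, hθ, hθ1, hprod⟩ := hpos k
    have hui : ∀ j, u j ∈ Sg ∩ SX := fun j => ⟨(hu j).1, interior_subset (hu j).2⟩
    have hvi : ∀ j, v j ∈ Sh ∩ SY := fun j => ⟨(hv j).1, interior_subset (hv j).2⟩
    have ox := aux_opt (φ := φX) hA6
      (((v k + θ k • (v k - v (k-1))).comp A - (1 / τ k) • gX (u k) : X →L[ℝ] ℝ) : X →ₗ[ℝ] ℝ)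
      (γg + 1 / τ k) (gX (u (k+1)) (x - u (k+1))) (hui (k+1)) hx
      (hφXdiff _ (hu (k+1)).2 _) (by
        intro y hy
        have := hstepx k y hy
        simp only [hDXdef, map_sub] at this
        simp only [ContinuousLinearMap.coe_coe, ContinuousLinearMap.sub_apply,
          ContinuousLinearMap.comp_apply, ContinuousLinearMap.smul_apply, smul_eq_mul]
        linarith)
    have oy := aux_opt (φ := φY) (hhconv.subset Set.inter_subset_left
        (hhconv.1.inter hφYconv.1))
      ((-(ContinuousLinearMap.apply ℝ ℝ (A (u (k+1)))) -
        (1 / σ k) • (ContinuousLinearMap.apply ℝ ℝ (gY (v k))) : (Y →L[ℝ] ℝ) →L[ℝ] ℝ) :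
          (Y →L[ℝ] ℝ) →ₗ[ℝ] ℝ)
      (1 / σ k) ((p - v (k+1)) (gY (v (k+1)))) (hvi (k+1)) hp
      (hφYdiff _ (hv (k+1)).2 _) (by
        intro y hy
        have := hstepy k y hy
        simp only [hDYdef, ContinuousLinearMap.sub_apply] at this
        simp only [ContinuousLinearMap.coe_coe, ContinuousLinearMap.sub_apply,
          ContinuousLinearMap.neg_apply, ContinuousLinearMap.apply_apply,
          ContinuousLinearMap.smul_apply, smul_eq_mul]
        linarith)
    simp only [ContinuousLinearMap.coe_coe, ContinuousLinearMap.sub_apply,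
      ContinuousLinearMap.comp_apply, ContinuousLinearMap.smul_apply, smul_eq_mul,
      ContinuousLinearMap.neg_apply, ContinuousLinearMap.apply_apply,
      ContinuousLinearMap.add_apply, map_sub] at ox oy
    -- cross term
    have cross : θ k * ((v k - v (k-1)) (A (u k - u (k+1)))) ≤
        (1 / σ k) * DY (v k) (v (k-1)) + (1 / τ k) * DX (u (k+1)) (u k) := by
      have h1 := hscY _ (hvi k).2 _ (hv (k-1)).2
      have h2 := hscX _ (hui (k+1)).2 _ (hu k).2
      rw [norm_sub_rev] at h2
      have h3 : (v k - v (k-1)) (A (u k - u (k+1))) ≤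
          ‖v k - v (k-1)‖ * (‖A‖ * ‖u k - u (k+1)‖) := by
        refine (le_abs_self _).trans ?_
        refine ((v k - v (k-1)).le_opNorm _).trans ?_
        gcongr
        exact A.le_opNorm _
      set a := ‖v k - v (k-1)‖
      set b := ‖u k - u (k+1)‖
      have ha : 0 ≤ a := norm_nonneg _
      have hb : 0 ≤ b := norm_nonneg _
      have hnn : 0 ≤ a * (‖A‖ * b) := by positivity
      have hi : 1 / τ k = ‖A‖ ^ 2 * σ k := by
        rw [div_eq_iff hτ.ne']; exact hprod.symm
      have h4 : a * (‖A‖ * b) ≤ (1 / σ k) * (1/2 * a^2) + (1 / τ k) * (1/2 * b^2) := by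
        rw [hi]
        have : (1 / σ k) * (1/2 * a^2) + (‖A‖ ^ 2 * σ k) * (1/2 * b^2) - a * (‖A‖ * b)
          = (1 / (2 * σ k)) * (a - ‖A‖ * σ k * b) ^ 2 := by field_simp; ring
        have h5 : 0 ≤ (1 / (2 * σ k)) * (a - ‖A‖ * σ k * b) ^ 2 := by positivity
        linarith
      calc _ ≤ θ k * (a * (‖A‖ * b)) := mul_le_mul_of_nonneg_left h3 hθ.le
        _ ≤ 1 * (a * (‖A‖ * b)) := mul_le_mul_of_nonneg_right hθ1 hnn
        _ ≤ (1 / σ k) * (1/2 * a^2) + (1 / τ k) * (1/2 * b^2) := by rw [one_mul]; exact h4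
        _ ≤ _ := by gcongr
    have hθ' := (hpos (k+1)).2.2.1
    have hD : (1 / θ (k+1)) * Δ (k+1) x p = (γg + 1 / τ k) * DX x (u (k+1))
        + (1 / σ k) * DY p (v (k+1)) + (1 / σ k) * DY (v (k+1)) (v k)
        + (v (k+1) - v k) (A (x - u (k+1))) := by
      rw [hΔdef, hτrec, hσrec, Nat.add_sub_cancel]
      have e1 : 1 / θ (k+1) * (1 / (θ (k+1) * τ k)) = γg + 1 / τ k := by
        have := hθsq k
        field_simp
        linarith
      have e2 : 1 / θ (k+1) * (1 / (σ k / θ (k+1))) = 1 / σ k := by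
        field_simp
      have e3 : 1 / θ (k+1) * θ (k+1) = 1 := by field_simp
      rw [← e1, ← e2]
      linear_combination ((v (k+1) - v k) (A (x - u (k+1)))) * e3
    rw [hD, hΔdef, hLdef, hLdef]
    simp only [hDXdef, hDYdef, map_sub, ContinuousLinearMap.sub_apply] at cross ⊢
    linarith
  intro K hK x hx p hp
  -- telescoping
  have htel : ∀ K, ∑ k ∈ Finset.Icc 1 K, (σ (k-1) / σ 0) * (L (u k) p - L x (v k)) ≤
      Δ 0 x p - (σ K / σ 0) * Δ K x p := by
    intro K
    induction K with
    | zero => simp [hσ0.ne']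
    | succ K ih =>
      rw [Finset.sum_Icc_succ_top (by omega), Nat.add_sub_cancel]
      have hs := hstep K x hx p hp
      have hσK := (hpos K).2.1
      have := mul_le_mul_of_nonneg_left hs (show 0 ≤ σ K / σ 0 by positivity)
      have e : σ (K+1) / σ 0 * Δ (K+1) x p
          = σ K / σ 0 * (1 / θ (K+1) * Δ (K+1) x p) := by
        rw [hσrec]; ring
      rw [e]
      linarith
  have hw : ∀ k ∈ Finset.Icc 1 K, 0 ≤ σ (k-1) / σ 0 := fun k _ =>
    (div_pos (hpos _).2.1 hσ0).le
  have hTp : 0 < T K := by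
    rw [hT]
    exact Finset.sum_pos (fun k _ => div_pos (hpos _).2.1 hσ0) ⟨1, by simp [hK]⟩
  have j1 := aux_jensen hgconv _ _ u (T K) hw (hT K) hTp (fun i _ => (hu i).1)
  have j2 := aux_jensen hhconv _ _ v (T K) hw (hT K) hTp (fun i _ => (hv i).1)
  rw [← hXK] at j1
  rw [← hYK] at j2
  have l1 : T K * p (A (XK K)) = ∑ k ∈ Finset.Icc 1 K, σ (k-1) / σ 0 * p (A (u k)) := by
    rw [hXK]
    simp only [map_smul, map_sum, smul_eq_mul]
    field_simp
  have l2 : T K * (YK K) (A x) = ∑ k ∈ Finset.Icc 1 K, σ (k-1) / σ 0 * (v k) (A x) := by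
    rw [hYK]
    simp only [ContinuousLinearMap.smul_apply, ContinuousLinearMap.sum_apply, smul_eq_mul]
    field_simp
  refine le_trans ?_ (htel K)
  have e : ∑ k ∈ Finset.Icc 1 K, (σ (k-1) / σ 0) * (L (u k) p - L x (v k))
      = ∑ k ∈ Finset.Icc 1 K, σ (k-1) / σ 0 * g (u k)
        + ∑ k ∈ Finset.Icc 1 K, σ (k-1) / σ 0 * p (A (u k))
        + ∑ k ∈ Finset.Icc 1 K, σ (k-1) / σ 0 * hst (v k)
        - ∑ k ∈ Finset.Icc 1 K, σ (k-1) / σ 0 * (v k) (A x)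
        - T K * (hst p + g x) := by
    rw [hT, Finset.sum_mul, ← Finset.sum_add_distrib, ← Finset.sum_add_distrib,
      ← Finset.sum_sub_distrib, ← Finset.sum_sub_distrib]
    refine Finset.sum_congr rfl fun k _ => ?_
    rw [hLdef, hLdef]; ring
  rw [e, hLdef, hLdef]
  linarith
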